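/- Let k be a field of characteristic 0 and let g be a finite-dimensional Lie algebra over k. Then the universal enveloping algebra U(g) is semiprimitive, i.e., its Jacobson radical (the intersection of all maximal left ideals) is zero. -/

import Mathlib

/-!
`U(L)` is a bialgebra generated by primitive elements. For any such bialgebra `A` over a field of
characteristic 0, the graded ring of the word-length filtration is a polynomial ring. The leading
symbols are read off by functionals: left multiplication by a primitive element acts as a derivation
on the convolution algebra of `A`, which is commutative because `A` is cocommutative. Hence, if
`f 1 = 0`, the convolution power `f ^ n` vanishes on words of length less than `n` in the primitive
elements and equals `n! * ∏ f (vᵢ)` on a word `v₁ ⋯ vₙ`. So `f ^ n / n!` evaluates the symbol of an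
element of degree `n` at a point that can be prescribed freely on a basis of the primitive elements:
symbols are well defined, and degrees add up in products.

Consequently an element with a left inverse is a scalar. If `x` lies in the Jacobson radical, then
`x + 1` has a left inverse, so `x` is a scalar, and a scalar in a proper ideal is zero.
-/

open MvPolynomial WithConv
open scoped TensorProduct Nat

section Convolution

variable {R A B : Type*} [CommRing R] [Ring A] [Bialgebra R A] [CommRing B] [Algebra R B]

variable (R A) in
/-- The primitive elements of a bialgebra, those with `Δ v = v ⊗ 1 + 1 ⊗ v`, as a submodule; in an
enveloping algebra they include the Lie algebra. -/
def primitives : Submodule R A :=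
  LinearMap.eqLocus Coalgebra.comul
    ((TensorProduct.mk R A A).flip 1 + TensorProduct.mk R A A 1)

lemma mem_primitives {v : A} :
    v ∈ primitives R A ↔ Coalgebra.comul (R := R) v = v ⊗ₜ 1 + 1 ⊗ₜ v :=
  Iff.rfl

lemma counit_eq_zero_of_mem_primitives {v : A} (hv : v ∈ primitives R A) :
    Coalgebra.counit (R := R) v = 0 := by
  have h := Coalgebra.rTensor_counit_comul (R := R) v
  rw [mem_primitives.1 hv, map_add, LinearMap.rTensor_tmul, LinearMap.rTensor_tmul,
    Bialgebra.counit_one, add_eq_right] at h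
  simpa using congrArg (LinearMap.mul' R R ∘ₗ Coalgebra.counit.lTensor R) h

lemma mul_sub_mul_mem_primitives {u v : A} (hu : u ∈ primitives R A) (hv : v ∈ primitives R A) :
    u * v - v * u ∈ primitives R A := by
  rw [mem_primitives] at hu hv ⊢
  rw [map_sub, Bialgebra.comul_mul, Bialgebra.comul_mul, hu, hv]
  simp only [mul_add, add_mul, Algebra.TensorProduct.tmul_mul_tmul, mul_one, one_mul,
    TensorProduct.sub_tmul, TensorProduct.tmul_sub]
  abel

lemma isCocomm_of_adjoin_primitives (h : Algebra.adjoin R (primitives R A : Set A) = ⊤) :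
    Coalgebra.IsCocomm R A where
  comm_comp_comul := by
    have hcomm : (Algebra.TensorProduct.comm R A A).toAlgHom.comp (Bialgebra.comulAlgHom R A) =
        Bialgebra.comulAlgHom R A :=
      AlgHom.ext_of_adjoin_eq_top h fun v hv => by
        simp [mem_primitives.1 hv, add_comm]
    exact congrArg AlgHom.toLinearMap hcomm

lemma convMul_apply_one (f g : WithConv (A →ₗ[R] B)) : (f * g) 1 = f 1 * g 1 := by
  simp [Algebra.TensorProduct.one_def]

lemma convMul_apply_mul {v : A} (hv : v ∈ primitives R A) (f g : WithConv (A →ₗ[R] B)) (a : A) :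
    (f * g) (v * a) = (toConv (f.ofConv ∘ₗ LinearMap.mulLeft R v) * g) a +
      (f * toConv (g.ofConv ∘ₗ LinearMap.mulLeft R v)) a := by
  simp only [LinearMap.convMul_apply, Bialgebra.comul_mul, mem_primitives.1 hv]
  induction Coalgebra.comul (R := R) a using TensorProduct.induction_on with
  | zero => simp
  | tmul b c => simp [add_mul]
  | add b c hb hc =>
    simp only [mul_add, map_add, hb, hc]
    abel

variable [Coalgebra.IsCocomm R A]

/-- The derivation `f ↦ f (v * ·)` of the convolution algebra defined by a primitive element `v`. By
the Leibniz rule it computes convolution powers on words in primitive elements. -/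
noncomputable def convDerivation (v : A) (hv : v ∈ primitives R A) :
    Derivation R (WithConv (A →ₗ[R] B)) (WithConv (A →ₗ[R] B)) :=
  .mk'
    { toFun f := toConv (f.ofConv ∘ₗ LinearMap.mulLeft R v)
      map_add' _ _ := rfl
      map_smul' _ _ := rfl }
    fun f g => by
      ext a
      rw [smul_eq_mul, smul_eq_mul, mul_comm g, add_comm]
      exact convMul_apply_mul hv f g a

lemma convDerivation_apply {v : A} (hv : v ∈ primitives R A) (f : WithConv (A →ₗ[R] B)) (a : A) :
    convDerivation v hv f a = f (v * a) := rfl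

lemma convMul_pow_succ_apply_mul {v : A} (hv : v ∈ primitives R A) (f g : WithConv (A →ₗ[R] B))
    (n : ℕ) (a : A) :
    (g * f ^ (n + 1)) (v * a) = (convDerivation v hv g * f ^ (n + 1)) a +
      (n + 1) * (g * convDerivation v hv f * f ^ n) a := by
  have leibniz : convDerivation v hv (g * f ^ (n + 1)) = convDerivation v hv g * f ^ (n + 1) +
      (n + 1) • (g * convDerivation v hv f * f ^ n) := by
    rw [Derivation.leibniz, Derivation.leibniz_pow, Nat.add_sub_cancel]
    simp only [smul_eq_mul, nsmul_eq_mul]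
    ring
  rw [← convDerivation_apply hv, leibniz, ofConv_add, LinearMap.add_apply, ofConv_smul,
    LinearMap.smul_apply, nsmul_eq_mul, Nat.cast_succ]

lemma convMul_pow_apply_prod_of_length_lt {f : WithConv (A →ₗ[R] B)} (hf : f 1 = 0)
    (g : WithConv (A →ₗ[R] B)) {l : List A} (hl : ∀ v ∈ l, v ∈ primitives R A) {n : ℕ}
    (hn : l.length < n) : (g * f ^ n) l.prod = 0 := by
  obtain _ | n := n
  · simp at hn
  induction l generalizing g n with
  | nil => rw [List.prod_nil, pow_succ, ← mul_assoc, convMul_apply_one, hf, mul_zero]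
  | cons v l ih =>
    obtain ⟨hv, hl⟩ := List.forall_mem_cons.1 hl
    rw [List.length_cons, add_lt_add_iff_right] at hn
    obtain _ | n := n
    · simp at hn
    rw [List.prod_cons, convMul_pow_succ_apply_mul hv, ih _ hl _ (by omega), ih _ hl _ hn, mul_zero,
      add_zero]

lemma convMul_pow_length_apply_prod {f : WithConv (A →ₗ[R] B)} (hf : f 1 = 0)
    (g : WithConv (A →ₗ[R] B)) {l : List A} (hl : ∀ v ∈ l, v ∈ primitives R A) :
    (g * f ^ l.length) l.prod = g 1 * (l.length ! * (l.map f).prod) := by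
  induction l generalizing g with
  | nil => simp [-LinearMap.convMul_apply]
  | cons v l ih =>
    obtain ⟨hv, hl⟩ := List.forall_mem_cons.1 hl
    rw [List.prod_cons, List.length_cons, convMul_pow_succ_apply_mul hv,
      convMul_pow_apply_prod_of_length_lt hf _ hl l.length.lt_succ_self, ih _ hl,
      convMul_apply_one, convDerivation_apply, List.map_cons, List.prod_cons,
      Nat.factorial_succ, mul_one, zero_add]
    push_cast
    ring

end Convolution

section Words

variable {R A I : Type*} [CommRing R] [Ring A] [Algebra R A]

variable (R) in
/-- The span of the words of length less than `n` in the letters `y i`: the term of degree `n - 1`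
of the word-length filtration, indexed so that the term of degree `-1` is available. -/
def wordDegreeLT (y : I → A) (n : ℕ) : Submodule R A :=
  Submodule.span R ((fun l : List I => (l.map y).prod) '' {l | l.length < n})

variable (y : I → A)

lemma prod_map_mem_wordDegreeLT {l : List I} {n : ℕ} (h : l.length < n) :
    (l.map y).prod ∈ wordDegreeLT R y n :=
  Submodule.subset_span ⟨l, h, rfl⟩

lemma wordDegreeLT_zero : wordDegreeLT R y 0 = ⊥ := by
  simp [wordDegreeLT]

lemma wordDegreeLT_one : wordDegreeLT R y 1 = 1 := by
  simp [wordDegreeLT, Submodule.one_eq_span]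

variable {y}

lemma mul_mem_wordDegreeLT {m n p : ℕ} (hp : m + n ≤ p + 1) {a b : A}
    (ha : a ∈ wordDegreeLT R y m) (hb : b ∈ wordDegreeLT R y n) : a * b ∈ wordDegreeLT R y p := by
  have hle : wordDegreeLT R y m * wordDegreeLT R y n ≤ wordDegreeLT R y p := by
    rw [wordDegreeLT, wordDegreeLT, Submodule.span_mul_span, Submodule.span_le]
    rintro _ ⟨_, ⟨l, (hl : l.length < m), rfl⟩, _, ⟨l', (hl' : l'.length < n), rfl⟩, rfl⟩
    have hlen : (l ++ l').length < p := by
      rw [List.length_append]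
      omega
    simpa using prod_map_mem_wordDegreeLT y hlen
  exact hle (Submodule.mul_mem_mul ha hb)

lemma wordDegreeLT_mono : Monotone (wordDegreeLT R y) := fun _ _ h =>
  Submodule.span_mono (Set.image_mono fun _ hl => lt_of_lt_of_le hl h)

lemma span_range_le_wordDegreeLT_two : Submodule.span R (Set.range y) ≤ wordDegreeLT R y 2 :=
  Submodule.span_le.2 <| Set.range_subset_iff.2 fun i => by
    simpa using prod_map_mem_wordDegreeLT y (l := [i]) one_lt_two

lemma exists_mem_wordDegreeLT (hy : Algebra.adjoin R (Set.range y) = ⊤) (a : A) :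
    ∃ n, a ∈ wordDegreeLT R y n := by
  have ha : a ∈ Algebra.adjoin R (Set.range y) := hy ▸ Algebra.mem_top
  induction ha using Algebra.adjoin_induction with
  | mem x hx => exact ⟨2, span_range_le_wordDegreeLT_two (Submodule.subset_span hx)⟩
  | algebraMap r => exact ⟨1, wordDegreeLT_one (R := R) y ▸ Submodule.algebraMap_mem r⟩
  | add a b _ _ ha hb =>
    obtain ⟨m, hm⟩ := ha
    obtain ⟨n, hn⟩ := hb
    exact ⟨m + n, add_mem (wordDegreeLT_mono (by omega) hm) (wordDegreeLT_mono (by omega) hn)⟩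
  | mul a b _ _ ha hb =>
    obtain ⟨m, hm⟩ := ha
    obtain ⟨n, hn⟩ := hb
    exact ⟨m + n, mul_mem_wordDegreeLT (by omega) hm hn⟩

lemma exists_mem_wordDegreeLT_succ_notMem (hy : Algebra.adjoin R (Set.range y) = ⊤) {a : A}
    (ha : a ≠ 0) : ∃ n, a ∈ wordDegreeLT R y (n + 1) ∧ a ∉ wordDegreeLT R y n := by
  classical
  have hex := exists_mem_wordDegreeLT hy a
  obtain ⟨n, hn⟩ : ∃ n, Nat.find hex = n + 1 :=
    Nat.exists_eq_succ_of_ne_zero fun h => ha (by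
      simpa [h, wordDegreeLT_zero] using Nat.find_spec hex)
  exact ⟨n, hn ▸ Nat.find_spec hex, Nat.find_min hex (by omega)⟩

lemma prod_map_sub_prod_map_mem_wordDegreeLT_of_perm
    (hy : ∀ i j, y i * y j - y j * y i ∈ Submodule.span R (Set.range y)) {l l' : List I}
    (h : l.Perm l') : (l.map y).prod - (l'.map y).prod ∈ wordDegreeLT R y l.length := by
  induction h with
  | nil => simp
  | cons i _ ih =>
    rw [List.map_cons, List.map_cons, List.prod_cons, List.prod_cons, ← mul_sub]
    exact mul_mem_wordDegreeLT (by simp only [List.length_cons]; omega)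
      (span_range_le_wordDegreeLT_two (Submodule.subset_span ⟨i, rfl⟩)) ih
  | swap i j l =>
    have commutator : ((j :: i :: l).map y).prod - ((i :: j :: l).map y).prod =
        (y j * y i - y i * y j) * (l.map y).prod := by
      simp only [List.map_cons, List.prod_cons]
      noncomm_ring
    rw [commutator]
    exact mul_mem_wordDegreeLT (by simp only [List.length_cons]; omega)
      (span_range_le_wordDegreeLT_two (hy j i)) (prod_map_mem_wordDegreeLT y l.length.lt_succ_self)
  | trans h₁ _ ih₁ ih₂ =>
    rw [← h₁.length_eq] at ih₂
    simpa using add_mem ih₁ ih₂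

variable (R) in
/-- The graph of the relation that `a` has degree at most `n` and `p` is a symbol of degree `n` of
`a`: it pairs a word of length `n` with the commutative monomial in the same letters, and a shorter
word with `0`. -/
noncomputable def symbolGraph (y : I → A) (n : ℕ) : Submodule R (A × MvPolynomial I R) :=
  Submodule.span R ((fun l : List I =>
    ((l.map y).prod, if l.length = n then (l.map X).prod else 0)) '' {l | l.length ≤ n})

lemma exists_mem_symbolGraph {n : ℕ} {a : A} (ha : a ∈ wordDegreeLT R y (n + 1)) :
    ∃ p, (a, p) ∈ symbolGraph R y n := by
  have hle : wordDegreeLT R y (n + 1) ≤ (symbolGraph R y n).map (LinearMap.fst R A _) := by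
    rw [wordDegreeLT, Submodule.span_le]
    rintro _ ⟨l, hl, rfl⟩
    exact ⟨_, Submodule.subset_span ⟨l, Nat.le_of_lt_succ hl, rfl⟩, rfl⟩
  simpa using hle ha

lemma mk_zero_mem_symbolGraph {n : ℕ} {a : A} (ha : a ∈ wordDegreeLT R y n) :
    (a, 0) ∈ symbolGraph R y n := by
  have hle : wordDegreeLT R y n ≤ (symbolGraph R y n).comap (LinearMap.inl R A _) := by
    rw [wordDegreeLT, Submodule.span_le]
    rintro _ ⟨l, (hl : l.length < n), rfl⟩
    exact Submodule.subset_span ⟨l, hl.le, by simp [hl.ne]⟩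
  exact hle ha

lemma mul_mem_symbolGraph {m n : ℕ} {a b : A} {p q : MvPolynomial I R}
    (ha : (a, p) ∈ symbolGraph R y m) (hb : (b, q) ∈ symbolGraph R y n) :
    (a * b, p * q) ∈ symbolGraph R y (m + n) := by
  have hle : symbolGraph R y m * symbolGraph R y n ≤ symbolGraph R y (m + n) := by
    rw [symbolGraph, symbolGraph, Submodule.span_mul_span, Submodule.span_le]
    rintro _ ⟨_, ⟨l, (hl : l.length ≤ m), rfl⟩, _, ⟨l', (hl' : l'.length ≤ n), rfl⟩, rfl⟩
    have htop : l.length + l'.length = m + n ↔ l'.length = n ∧ l.length = m := by omega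
    refine Submodule.subset_span ⟨l ++ l', ?_, ?_⟩
    · simpa using add_le_add hl hl'
    · simp [htop, ite_and]
  exact hle (Submodule.mul_mem_mul ha hb)

variable (R) in
/-- The linear map sending a commutative monomial to the word with the same letters, taken in some
arbitrarily chosen order. -/
noncomputable def monomialLift (y : I → A) : MvPolynomial I R →ₗ[R] A :=
  (basisMonomials I R).constr R fun s => (s.toMultiset.toList.map y).prod

lemma exists_perm_monomialLift_prod_map_X (y : I → A) (l : List I) :
    ∃ l' : List I, l.Perm l' ∧ monomialLift R y (l.map X).prod = (l'.map y).prod := by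
  classical
  have hl : (l.map (X : I → MvPolynomial I R)).prod =
      basisMonomials I R (Multiset.toFinsupp (l : Multiset I)) := by
    induction l with
    | nil => simp
    | cons i l ih =>
      rw [List.map_cons, List.prod_cons, ih, ← Multiset.cons_coe, ← Multiset.singleton_add,
        Multiset.toFinsupp_add, Multiset.toFinsupp_singleton, coe_basisMonomials]
      simp [monomial_single_add]
  refine ⟨(l : Multiset I).toList, Multiset.coe_eq_coe.1 (Multiset.coe_toList _).symm, ?_⟩
  rw [hl, monomialLift, Module.Basis.constr_basis, Multiset.toFinsupp_toMultiset]

lemma sub_monomialLift_mem_wordDegreeLT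
    (hy : ∀ i j, y i * y j - y j * y i ∈ Submodule.span R (Set.range y)) {n : ℕ} {a : A}
    {p : MvPolynomial I R} (h : (a, p) ∈ symbolGraph R y n) :
    a - monomialLift R y p ∈ wordDegreeLT R y n := by
  have hle : symbolGraph R y n ≤ (wordDegreeLT R y n).comap
      (LinearMap.fst R A _ - monomialLift R y ∘ₗ LinearMap.snd R A _) := by
    rw [symbolGraph, Submodule.span_le]
    rintro _ ⟨l, (hl : l.length ≤ n), rfl⟩
    rcases hl.lt_or_eq with h | rfl
    · simpa [h.ne] using prod_map_mem_wordDegreeLT y h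
    · obtain ⟨l', hl', hlift⟩ := exists_perm_monomialLift_prod_map_X (R := R) y l
      simpa [hlift] using prod_map_sub_prod_map_mem_wordDegreeLT_of_perm hy hl'
  exact hle h

end Words

section Symbols

variable {R k A B I : Type*} [CommRing R] [Field k] [Ring A] [CommRing B] [Algebra R B] {y : I → A}

lemma convMul_pow_apply_of_mem_symbolGraph [Bialgebra R A] [Coalgebra.IsCocomm R A]
    (hy : ∀ i, y i ∈ primitives R A) {f : WithConv (A →ₗ[R] B)} (hf : f 1 = 0) {n : ℕ} {a : A}
    {p : MvPolynomial I R} (h : (a, p) ∈ symbolGraph R y n) :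
    (f ^ n) a = n ! * aeval (fun i => f (y i)) p := by
  have heq := LinearMap.eqOn_span (R := R)
    (f := (f ^ n).ofConv ∘ₗ LinearMap.fst R A (MvPolynomial I R))
    (g := n ! • (aeval fun i => f (y i)).toLinearMap ∘ₗ LinearMap.snd R A _) ?_ h
  · simpa using heq
  rintro _ ⟨l, (hl : l.length ≤ n), rfl⟩
  have hprim : ∀ v ∈ l.map y, v ∈ primitives R A := List.forall_mem_map.2 fun i _ => hy i
  rcases hl.lt_or_eq with h | rfl
  · have := convMul_pow_apply_prod_of_length_lt hf 1 hprim (n := n) (by simpa using h)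
    rw [one_mul] at this
    simpa [h.ne] using this
  · have := convMul_pow_length_apply_prod hf 1 hprim
    rw [one_mul, List.length_map] at this
    simpa [map_list_prod, Function.comp_def] using this

variable [Bialgebra k A]

lemma exists_linearMap_apply_one_eq_zero (hli : LinearIndependent k y)
    (hy : ∀ i, y i ∈ primitives k A) (ξ : I → k) :
    ∃ f : A →ₗ[k] k, f 1 = 0 ∧ ∀ i, f (y i) = ξ i := by
  obtain ⟨g, hg⟩ := LinearMap.exists_leftInverse_of_injective _ (LinearMap.ker_eq_bot.2 hli)
  let f₀ : A →ₗ[k] k := Finsupp.linearCombination k ξ ∘ₗ g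
  have hf₀ (i : I) : f₀ (y i) = ξ i := by
    have hgi : g (y i) = Finsupp.single i 1 := by
      simpa using LinearMap.congr_fun hg (Finsupp.single i 1)
    simp [f₀, hgi]
  refine ⟨f₀ - f₀ 1 • Coalgebra.counit, by simp, fun i => ?_⟩
  simp [hf₀, counit_eq_zero_of_mem_primitives (hy i)]

variable [CharZero k] [Coalgebra.IsCocomm k A]

lemma eq_of_mem_symbolGraph (hli : LinearIndependent k y) (hy : ∀ i, y i ∈ primitives k A)
    {n : ℕ} {a : A} {p q : MvPolynomial I k} (hp : (a, p) ∈ symbolGraph k y n)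
    (hq : (a, q) ∈ symbolGraph k y n) : p = q := by
  refine MvPolynomial.funext fun ξ => ?_
  obtain ⟨f, hf, hfy⟩ := exists_linearMap_apply_one_eq_zero hli hy ξ
  have heval {r : MvPolynomial I k} (hr : (a, r) ∈ symbolGraph k y n) :
      (toConv f ^ n) a = n ! * eval ξ r := by
    rw [convMul_pow_apply_of_mem_symbolGraph hy hf hr, ← aeval_eq_eval]
    simp only [hfy]
  exact mul_left_cancel₀ (Nat.cast_ne_zero.2 n.factorial_ne_zero)
    ((heval hp).symm.trans (heval hq))

lemma mul_notMem_wordDegreeLT (hli : LinearIndependent k y) (hy : ∀ i, y i ∈ primitives k A)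
    (hcomm : ∀ i j, y i * y j - y j * y i ∈ Submodule.span k (Set.range y)) {m n : ℕ} {a b : A}
    (ha : a ∈ wordDegreeLT k y (m + 1)) (ha' : a ∉ wordDegreeLT k y m)
    (hb : b ∈ wordDegreeLT k y (n + 1)) (hb' : b ∉ wordDegreeLT k y n) :
    a * b ∉ wordDegreeLT k y (m + n) := by
  obtain ⟨p, hp⟩ := exists_mem_symbolGraph ha
  obtain ⟨q, hq⟩ := exists_mem_symbolGraph hb
  have hp0 : p ≠ 0 := by
    rintro rfl
    exact ha' (by simpa using sub_monomialLift_mem_wordDegreeLT hcomm hp)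
  have hq0 : q ≠ 0 := by
    rintro rfl
    exact hb' (by simpa using sub_monomialLift_mem_wordDegreeLT hcomm hq)
  exact fun hab => mul_ne_zero hp0 hq0 <|
    eq_of_mem_symbolGraph hli hy (mul_mem_symbolGraph hp hq) (mk_zero_mem_symbolGraph hab)

end Symbols

section Units

variable {k A : Type*} [Field k] [CharZero k] [Ring A] [Bialgebra k A]

lemma exists_algebraMap_eq_of_mul_eq_one (h : Algebra.adjoin k (primitives k A : Set A) = ⊤)
    {a b : A} (hab : a * b = 1) : ∃ c : k, algebraMap k A c = b := by
  have := isCocomm_of_adjoin_primitives h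
  have : Nontrivial A := (Bialgebra.counitAlgHom k A).toRingHom.domain_nontrivial
  obtain ⟨s, hs, hspan, hli⟩ := exists_linearIndependent k (primitives k A : Set A)
  rw [Submodule.span_eq] at hspan
  let y : s → A := Subtype.val
  have hy (i : s) : y i ∈ primitives k A := hs i.2
  have hspan_y : Submodule.span k (Set.range y) = primitives k A := by
    rw [Subtype.range_coe, hspan]
  have hgen : Algebra.adjoin k (Set.range y) = ⊤ := by rw [← Algebra.adjoin_span, hspan_y, h]
  have hcomm (i j : s) : y i * y j - y j * y i ∈ Submodule.span k (Set.range y) := by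
    rw [hspan_y]
    exact mul_sub_mul_mem_primitives (hy i) (hy j)
  obtain ⟨m, ha, ha'⟩ := exists_mem_wordDegreeLT_succ_notMem hgen (left_ne_zero_of_mul_eq_one hab)
  obtain ⟨n, hb, hb'⟩ := exists_mem_wordDegreeLT_succ_notMem hgen (right_ne_zero_of_mul_eq_one hab)
  have hdeg : m + n = 0 := by
    by_contra hne
    apply mul_notMem_wordDegreeLT hli hy hcomm ha ha' hb hb'
    rw [hab]
    exact prod_map_mem_wordDegreeLT y (l := []) (Nat.pos_of_ne_zero hne)
  obtain rfl : n = 0 := by omega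
  rwa [zero_add, wordDegreeLT_one, Submodule.mem_one] at hb

lemma jacobson_bot_of_adjoin_primitives (h : Algebra.adjoin k (primitives k A : Set A) = ⊤) :
    (⊥ : Ideal A).jacobson = ⊥ := by
  have : Nontrivial A := (Bialgebra.counitAlgHom k A).toRingHom.domain_nontrivial
  refine eq_bot_iff.2 fun x hx => ?_
  obtain ⟨z, hz⟩ := Ideal.mem_jacobson_iff.1 hx 1
  have hz' : z * (x + 1) = 1 := by
    rwa [Ideal.mem_bot, sub_eq_zero, mul_one, ← mul_add_one] at hz
  obtain ⟨c, hc⟩ := exists_algebraMap_eq_of_mul_eq_one h hz'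
  have hxc : x = algebraMap k A (c - 1) := by rw [map_sub, hc, map_one, add_sub_cancel_right]
  have hc1 : c - 1 = 0 := by
    by_contra hne
    have htop := Ideal.eq_top_of_isUnit_mem _ hx (hxc ▸ (IsUnit.mk0 _ hne).map (algebraMap k A))
    exact bot_ne_top (Ideal.jacobson_eq_top_iff.1 htop)
  rw [Ideal.mem_bot, hxc, hc1, map_zero]

end Units

section Enveloping

open UniversalEnvelopingAlgebra

attribute [local instance] LieRing.ofAssociativeRing

variable (R L : Type*) [CommRing R] [LieRing L] [LieAlgebra R L]

lemma universalEnvelopingAlgebra_adjoin_range_ι :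
    Algebra.adjoin R (Set.range (ι R : L → UniversalEnvelopingAlgebra R L)) = ⊤ := by
  have hrange : Set.range (ι R : L → UniversalEnvelopingAlgebra R L) =
      mkAlgHom R L '' Set.range (TensorAlgebra.ι R) := by
    rw [← Set.range_comp]
    rfl
  rw [hrange, ← AlgHom.map_adjoin, TensorAlgebra.adjoin_range_ι, Algebra.map_top,
    AlgHom.range_eq_top]
  exact RingCon.mkₐ_surjective _

/-- The comultiplication of `U(L)`, for which the image of `L` consists of primitive elements. -/
noncomputable def envelopingComul : UniversalEnvelopingAlgebra R L →ₐ[R]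
    UniversalEnvelopingAlgebra R L ⊗[R] UniversalEnvelopingAlgebra R L :=
  lift R
    { ((TensorProduct.mk R _ _).flip 1 + TensorProduct.mk R _ _ 1) ∘ₗ
        (ι R : L →ₗ⁅R⁆ UniversalEnvelopingAlgebra R L).toLinearMap with
      map_lie' := fun {x y} => by
        simp only [AddHom.toFun_eq_coe, LinearMap.coe_toAddHom, LinearMap.coe_comp,
          LieHom.coe_toLinearMap, Function.comp_apply, LieHom.map_lie, LinearMap.add_apply,
          LinearMap.flip_apply, TensorProduct.mk_apply, LieRing.of_associative_ring_bracket,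
          TensorProduct.sub_tmul, TensorProduct.tmul_sub, mul_add, add_mul,
          Algebra.TensorProduct.tmul_mul_tmul, mul_one, one_mul]
        abel }

lemma envelopingComul_ι (x : L) : envelopingComul R L (ι R x) = ι R x ⊗ₜ 1 + 1 ⊗ₜ ι R x :=
  lift_ι_apply R _ x

/-- The counit of `U(L)`, the augmentation that vanishes on the image of `L`. -/
noncomputable def envelopingCounit : UniversalEnvelopingAlgebra R L →ₐ[R] R := lift R 0

lemma envelopingCounit_ι (x : L) : envelopingCounit R L (ι R x) = 0 :=
  lift_ι_apply R _ x

/-- The standard bialgebra structure on `U(L)`, with the comultiplication and counit above. -/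
noncomputable instance : Bialgebra R (UniversalEnvelopingAlgebra R L) :=
  .ofAlgHom (envelopingComul R L) (envelopingCounit R L)
    (AlgHom.ext_of_adjoin_eq_top (universalEnvelopingAlgebra_adjoin_range_ι R L) (by
      rintro _ ⟨x, rfl⟩
      simp [envelopingComul_ι, Algebra.TensorProduct.one_def, TensorProduct.add_tmul,
        TensorProduct.tmul_add, add_assoc, -ι_apply]))
    (AlgHom.ext_of_adjoin_eq_top (universalEnvelopingAlgebra_adjoin_range_ι R L) (by
      rintro _ ⟨x, rfl⟩
      simp [envelopingComul_ι, envelopingCounit_ι, -ι_apply]))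
    (AlgHom.ext_of_adjoin_eq_top (universalEnvelopingAlgebra_adjoin_range_ι R L) (by
      rintro _ ⟨x, rfl⟩
      simp [envelopingComul_ι, envelopingCounit_ι, -ι_apply]))

lemma ι_mem_primitives (x : L) : ι R x ∈ primitives R (UniversalEnvelopingAlgebra R L) :=
  envelopingComul_ι R L x

lemma universalEnvelopingAlgebra_adjoin_primitives :
    Algebra.adjoin R (primitives R (UniversalEnvelopingAlgebra R L) :
      Set (UniversalEnvelopingAlgebra R L)) = ⊤ :=
  top_unique <| (universalEnvelopingAlgebra_adjoin_range_ι R L).ge.trans <|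
    Algebra.adjoin_mono <| Set.range_subset_iff.2 <| ι_mem_primitives R L

end Enveloping

theorem universalEnvelopingAlgebra_semiprimitive_general (k : Type*) [Field k] [CharZero k]
    (L : Type*) [LieRing L] [LieAlgebra k L] :
    (⊥ : Ideal (UniversalEnvelopingAlgebra k L)).jacobson = ⊥ :=
  jacobson_bot_of_adjoin_primitives (universalEnvelopingAlgebra_adjoin_primitives k L)

/-- The universal enveloping algebra of a finite-dimensional Lie algebra over a field of
characteristic 0 is semiprimitive: its Jacobson radical, the intersection of all maximal
left ideals, is zero. -/
theorem universalEnvelopingAlgebra_semiprimitive (k : Type*) [Field k] [CharZero k]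
    (L : Type*) [LieRing L] [LieAlgebra k L] [FiniteDimensional k L] :
    (⊥ : Ideal (UniversalEnvelopingAlgebra k L)).jacobson = ⊥ :=
  universalEnvelopingAlgebra_semiprimitive_general k L
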